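/- Let X be a compact metric space, T: X → X a continuous map, and A = (t_i)_{i≥1} a sequence of natural numbers. Define K(A) = lim_{m→∞} limsup_{n→∞} (1/n)|S_A(n,m)|, where S_A(n,m) = {t_i + j : 1 ≤ i ≤ n, 0 ≤ j ≤ m−1}. Unless (K(A) = ∞ and h_top(T) = 0), the topological sequence entropy satisfies: h^A_top(T) = K(A)·h_top(T) if K(A) < ∞ and h_top(T) < ∞; h^A_top(T) = ∞ if K(A) = ∞ and h_top(T) > 0; h^A_top(T) = ∞ if K(A) > 0 and h_top(T) = ∞; and h^A_top(T) = 0 if K(A) = 0 and h_top(T) = ∞. -/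

import Mathlib

open Filter

variable {X : Type*} [MetricSpace X]

/-- `spaN T F ε` : the minimal cardinality of a set `E ⊆ X` such that every `x ∈ X`
satisfies `max_{i ∈ F} dist (T^[i] x) (T^[i] e) ≤ ε` for some `e ∈ E`. -/
noncomputable def spaN (T : X → X) (F : Finset ℕ) (ε : ℝ) : ℕ :=
  sInf {k : ℕ | ∃ E : Finset X, E.card = k ∧
    ∀ x : X, ∃ e ∈ E, ∀ i ∈ F, dist (T^[i] x) (T^[i] e) ≤ ε}

/-- Topological sequence entropy along the sequence `A = (t_i)_{i ≥ 1}`: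
`h^A_top(T) = lim_{ε→0⁺} limsup_n (1/n) log spa(T,{t₁,…,t_n},ε)`
(the limit as `ε → 0⁺` of the antitone-in-`ε` quantity is its supremum over `ε > 0`). -/
noncomputable def seqEntTop (T : X → X) (A : ℕ → ℕ) : EReal :=
  ⨆ (ε : ℝ) (_ : 0 < ε),
    Filter.limsup
      (fun n : ℕ =>
        ((Real.log (spaN T ((Finset.Icc 1 n).image A) ε) / n : ℝ) : EReal))
      Filter.atTop

/-- Topological entropy: topological sequence entropy along `t_i = i − 1`,
i.e. with index sets `{0,…,n−1}`. -/
noncomputable def htopN (T : X → X) : EReal := seqEntTop T (fun i => i - 1)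

open Pointwise in
/-- `K(A) = lim_{m→∞} limsup_{n→∞} (1/n)|S_A(n,m)|` where
`S_A(n,m) = {t_i + j : 1 ≤ i ≤ n, 0 ≤ j ≤ m−1}` (the limit in `m` of the monotone-in-`m`
quantity is its supremum over `m`). -/
noncomputable def KA (A : ℕ → ℕ) : EReal :=
  ⨆ m : ℕ, Filter.limsup
    (fun n : ℕ =>
      (((((Finset.Icc 1 n).image A + Finset.range m).card : ℝ) / n : ℝ) : EReal))
    Filter.atTop

/-!
Upper bound: at most `|S_A(n, m)| / m` disjoint blocks of length `m`, chosen greedily with starting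
points in `{t₁, …, tₙ}`, cover `{t₁, …, tₙ}`, and the part of an orbit along each block is
determined up to `2ε` by a point of an optimal `ε`-spanning set for `{0, …, m - 1}`.

Lower bound: for `b < h_top(T)` there is a single `δ > 0` with `log spa(T, S, δ) ≥ |S| b` for all
finite `S`. Take a maximal `({0, …, L - 1}, ε)`-separated set with the uniform distribution, and
code each orbit by the balls of a fixed finite cover that contain the current point, the radius
being chosen by pigeonhole so that orbits are rarely close to a sphere. Relative to an `S`-spanning
set, Fano's inequality bounds the entropy of the code along every translate of `S`, and averaging
over the translates, in the manner of Shearer's inequality, compares this with the total entropy.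
Applying the bound to `S = S_A(n, m)` suffices, since by uniform continuity `spa(T, S_A(n, m), δ)`
is at most `spa(T, {t₁, …, tₙ}, δ')` for some `δ'` independent of `n`.
-/

section ConditionalEntropy

open Finset
open scoped BigOperators

lemma sum_weight_div_card_fiber_le {Ω κ : Type*} [Fintype κ] [DecidableEq κ]
    (s : Finset Ω) (f : Ω → κ) {w : κ → ℝ} (hw : ∀ z, 0 ≤ w z) :
    ∑ x ∈ s, w (f x) / #{u ∈ s | f u = f x} ≤ ∑ z, w z := by
  rw [sum_comp (fun z ↦ w z / #{u ∈ s | f u = z}) f]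
  refine (sum_le_univ_sum_of_nonneg fun z ↦ by have := hw z; positivity).trans
    (sum_le_sum fun z _ ↦ ?_)
  rw [nsmul_eq_mul, mul_div_left_comm]
  exact mul_le_of_le_one_right (hw z) (div_self_le_one _)

variable {Ω κ : Type*} [Fintype Ω] [DecidableEq κ] (Z : ℕ → Ω → κ)

/-- The atom of `x` in the partition of `Ω` generated by `Z 0, …, Z (j - 1)`. -/
def pastFiber (j : ℕ) (x : Ω) : Finset Ω := {y | ∀ i < j, Z i y = Z i x}

/-- The conditional probability, under the uniform distribution on `Ω`, that `Z j` takes the value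
it takes at `x`, given that `Z 0, …, Z (j - 1)` take the values they take at `x`. -/
noncomputable def condProb (j : ℕ) (x : Ω) : ℝ := #(pastFiber Z (j + 1) x) / #(pastFiber Z j x)

/-- The Shannon entropy `H(Z_j | Z_0, …, Z_{j-1})`, in nats, under the uniform distribution
on `Ω`. -/
noncomputable def condEntropy (j : ℕ) : ℝ := 𝔼 x, -Real.log (condProb Z j x)

variable {Z} {j : ℕ} {x y : Ω}

lemma mem_pastFiber : y ∈ pastFiber Z j x ↔ ∀ i < j, Z i y = Z i x := by
  simp only [pastFiber, mem_filter_univ]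

lemma mem_pastFiber_comm : y ∈ pastFiber Z j x ↔ x ∈ pastFiber Z j y := by
  simp only [mem_pastFiber, eq_comm]

lemma pastFiber_eq_of_mem (h : y ∈ pastFiber Z j x) : pastFiber Z j y = pastFiber Z j x := by
  ext u
  simp only [mem_pastFiber] at h ⊢
  exact forall₂_congr fun i hi ↦ by rw [h i hi]

lemma pastFiber_anti {i j : ℕ} (hij : i ≤ j) : pastFiber Z j x ⊆ pastFiber Z i x := fun _ hy ↦
  mem_pastFiber.2 fun k hk ↦ mem_pastFiber.1 hy k (hk.trans_le hij)

lemma pastFiber_succ : pastFiber Z (j + 1) x = {y ∈ pastFiber Z j x | Z j y = Z j x} := by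
  ext y
  simp only [mem_pastFiber, mem_filter, Nat.forall_lt_succ_right]

lemma card_pastFiber_pos : 0 < #(pastFiber Z j x) :=
  card_pos.2 ⟨x, mem_pastFiber.2 fun _ _ ↦ rfl⟩

lemma condProb_pos : 0 < condProb Z j x :=
  div_pos (Nat.cast_pos.2 card_pastFiber_pos) (Nat.cast_pos.2 card_pastFiber_pos)

lemma condProb_le_one : condProb Z j x ≤ 1 :=
  div_le_one_of_le₀ (Nat.cast_le.2 (card_le_card (pastFiber_anti j.le_succ))) (Nat.cast_nonneg _)

lemma condProb_eq_of_mem (h : y ∈ pastFiber Z (j + 1) x) : condProb Z j y = condProb Z j x := by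
  rw [condProb, condProb, pastFiber_eq_of_mem h, pastFiber_eq_of_mem (pastFiber_anti j.le_succ h)]

variable (Z)

lemma condEntropy_nonneg (j : ℕ) : 0 ≤ condEntropy Z j :=
  expect_nonneg fun _ _ ↦ neg_nonneg.2 (Real.log_nonpos condProb_pos.le condProb_le_one)

lemma neg_log_condProb (j : ℕ) (x : Ω) :
    -Real.log (condProb Z j x) =
      Real.log #(pastFiber Z j x) - Real.log #(pastFiber Z (j + 1) x) := by
  rw [condProb, Real.log_div (Nat.cast_ne_zero.2 card_pastFiber_pos.ne')
    (Nat.cast_ne_zero.2 card_pastFiber_pos.ne'), neg_sub]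

lemma sum_range_condEntropy_of_injective [Nonempty Ω] {L : ℕ}
    (hZ : ∀ x y, (∀ j < L, Z j x = Z j y) → x = y) :
    ∑ j ∈ range L, condEntropy Z j = Real.log (Fintype.card Ω) := by
  have telescope (x : Ω) :
      ∑ j ∈ range L, -Real.log (condProb Z j x) = Real.log (Fintype.card Ω) := by
    have first : pastFiber Z 0 x = univ := by ext; simp [mem_pastFiber]
    have last : pastFiber Z L x = {x} := by
      ext y
      exact mem_pastFiber.trans ⟨fun h ↦ mem_singleton.2 (hZ y x h), by simp_all⟩
    simp_rw [neg_log_condProb]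
    rw [sum_range_sub', first, last]
    simp
  simp_rw [condEntropy]
  rw [← expect_sum_comm, expect_congr rfl fun x _ ↦ telescope x, expect_const univ_nonempty]

/-- One step of the supermartingale behind `expect_prod_weight_div_condProb_le`: the factor
`w (Z j x) / condProb Z j x` has conditional expectation at most `∑ z, w z`. -/
lemma sum_mul_weight_div_condProb_le [Fintype κ] {P : Ω → ℝ} (hP : ∀ x, 0 ≤ P x) {j : ℕ}
    (hPj : ∀ x, ∀ y ∈ pastFiber Z j x, P y = P x) {w : κ → ℝ} (hw : ∀ z, 0 ≤ w z) :
    ∑ x, P x * (w (Z j x) / condProb Z j x) ≤ (∑ x, P x) * ∑ z, w z := by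
  calc ∑ x, P x * (w (Z j x) / condProb Z j x)
      = ∑ x, ∑ y ∈ pastFiber Z j x, P y * (w (Z j x) / #(pastFiber Z (j + 1) x)) := by
        refine sum_congr rfl fun x _ ↦ ?_
        rw [sum_congr rfl fun y hy ↦ by rw [hPj x y hy], sum_const, nsmul_eq_mul, condProb,
          div_div_eq_mul_div]
        ring
    _ = ∑ y, ∑ x ∈ pastFiber Z j y, P y * (w (Z j x) / #(pastFiber Z (j + 1) x)) :=
        sum_comm' fun _ _ ↦ by simp [mem_pastFiber_comm]
    _ = ∑ y, P y * ∑ x ∈ pastFiber Z j y,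
          w (Z j x) / #{u ∈ pastFiber Z j y | Z j u = Z j x} := by
        refine sum_congr rfl fun y _ ↦ ?_
        rw [mul_sum]
        exact sum_congr rfl fun x hx ↦ by rw [pastFiber_succ, pastFiber_eq_of_mem hx]
    _ ≤ ∑ y, P y * ∑ z, w z :=
        sum_le_sum fun y _ ↦
          mul_le_mul_of_nonneg_left (sum_weight_div_card_fiber_le _ _ hw) (hP y)
    _ = (∑ x, P x) * ∑ z, w z := (sum_mul ..).symm

lemma expect_prod_weight_div_condProb_le [Nonempty Ω] [Fintype κ] {w : ℕ → κ → ℝ}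
    (hw : ∀ j z, 0 ≤ w j z) (Q : Finset ℕ) :
    𝔼 x, ∏ j ∈ Q, (w j (Z j x) / condProb Z j x) ≤ ∏ j ∈ Q, ∑ z, w j z := by
  induction Q using Finset.induction_on_max with
  | empty => simp
  | insert N Q hQ ih =>
    have hN : N ∉ Q := fun h ↦ (hQ N h).false
    have step := sum_mul_weight_div_condProb_le Z (j := N)
      (P := fun x ↦ ∏ j ∈ Q, (w j (Z j x) / condProb Z j x))
      (fun x ↦ prod_nonneg fun j _ ↦ div_nonneg (hw _ _) condProb_pos.le)
      (fun x y hy ↦ prod_congr rfl fun j hj ↦ by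
        rw [mem_pastFiber.1 hy j (hQ j hj), condProb_eq_of_mem (pastFiber_anti (hQ j hj) hy)])
      (hw N)
    simp_rw [prod_insert hN, mul_comm (w N _ / _)]
    rw [Fintype.expect_eq_sum_div_card] at ih ⊢
    calc _ ≤ (∑ x, ∏ j ∈ Q, (w j (Z j x) / condProb Z j x)) * (∑ z, w N z) / Fintype.card Ω :=
          div_le_div_of_nonneg_right step (by positivity)
      _ = (∑ x, ∏ j ∈ Q, (w j (Z j x) / condProb Z j x)) / Fintype.card Ω * ∑ z, w N z :=
          mul_div_right_comm ..
      _ ≤ (∏ j ∈ Q, ∑ z, w j z) * ∑ z, w N z :=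
          mul_le_mul_of_nonneg_right ih (sum_nonneg fun z _ ↦ hw N z)
      _ = (∑ z, w N z) * ∏ j ∈ Q, ∑ z, w j z := mul_comm ..

lemma expect_log_le_log_expect [Nonempty Ω] {f : Ω → ℝ} (hf : ∀ x, 0 < f x) :
    𝔼 x, Real.log (f x) ≤ Real.log (𝔼 x, f x) := by
  simpa only [Fintype.expect_eq_sum_div_card, sum_div, smul_eq_mul, inv_mul_eq_div] using
    strictConcaveOn_log_Ioi.concaveOn.le_map_sum (t := univ)
      (w := fun _ : Ω ↦ (Fintype.card Ω : ℝ)⁻¹) (fun _ _ ↦ by positivity) (by simp)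
      (fun x _ ↦ hf x)

/-- `w g j z / ∑ z, w g j z` plays the role of a predicted probability of `z` at time `j`, made with
the side information `g`; this is Gibbs' inequality for such predictors. -/
lemma sum_condEntropy_le_log_sub_expect [Nonempty Ω] [Fintype κ] {Γ : Type*} [Fintype Γ]
    {w : Γ → ℕ → κ → ℝ} (hw : ∀ g j z, 0 < w g j z) (γ : Ω → Γ) (Q : Finset ℕ) :
    ∑ j ∈ Q, condEntropy Z j ≤
      Real.log (∑ g, ∏ j ∈ Q, ∑ z, w g j z) - 𝔼 x, ∑ j ∈ Q, Real.log (w (γ x) j (Z j x)) := by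
  let f (g : Γ) (x : Ω) : ℝ := ∏ j ∈ Q, (w g j (Z j x) / condProb Z j x)
  have hf (g : Γ) (x : Ω) : 0 < f g x := prod_pos fun j _ ↦ div_pos (hw _ _ _) condProb_pos
  have h_expect : 𝔼 x, f (γ x) x ≤ ∑ g, ∏ j ∈ Q, ∑ z, w g j z :=
    calc 𝔼 x, f (γ x) x ≤ 𝔼 x, ∑ g, f g x := expect_le_expect fun x _ ↦
          single_le_sum (f := fun g ↦ f g x) (fun g _ ↦ (hf g x).le) (mem_univ _)
      _ = ∑ g, 𝔼 x, f g x := expect_sum_comm ..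
      _ ≤ _ := sum_le_sum fun g _ ↦
          expect_prod_weight_div_condProb_le Z (fun j z ↦ (hw g j z).le) Q
  have h_log (x : Ω) : Real.log (f (γ x) x) =
      ∑ j ∈ Q, Real.log (w (γ x) j (Z j x)) + ∑ j ∈ Q, -Real.log (condProb Z j x) := by
    rw [Real.log_prod fun j _ ↦ (div_pos (hw _ _ _) condProb_pos).ne', ← sum_add_distrib]
    exact sum_congr rfl fun j _ ↦ by
      rw [Real.log_div (hw _ _ _).ne' condProb_pos.ne', sub_eq_add_neg]
  have h_jensen := (expect_log_le_log_expect fun x ↦ hf (γ x) x).trans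
    (Real.log_le_log (expect_pos (fun x _ ↦ hf (γ x) x) univ_nonempty) h_expect)
  simp_rw [h_log] at h_jensen
  rw [expect_add_distrib, expect_sum_comm (f := fun x j ↦ -Real.log (condProb Z j x))] at h_jensen
  exact le_sub_iff_add_le'.2 h_jensen

lemma condEntropy_le_log_card [Nonempty Ω] [Fintype κ] (j : ℕ) :
    condEntropy Z j ≤ Real.log (Fintype.card κ) := by
  simpa using sum_condEntropy_le_log_sub_expect Z (Γ := Unit) (w := fun _ _ _ ↦ 1)
    (fun _ _ _ ↦ one_pos) (fun _ ↦ ()) {j}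

/-- A form of Fano's inequality: `Z j` is predicted by `ζ (γ x) j`, with total error weight `η`. -/
lemma sum_condEntropy_le_of_decoder [Nonempty Ω] [Fintype κ] {Γ : Type*} [Fintype Γ]
    (γ : Ω → Γ) (ζ : Γ → ℕ → κ) {η : ℝ} (hη : 0 < η) (Q : Finset ℕ) :
    ∑ j ∈ Q, condEntropy Z j ≤ Real.log (Fintype.card Γ) + #Q * Real.log (1 + η) +
      Real.log (Fintype.card κ / η) *
        ∑ j ∈ Q, (#{x | Z j x ≠ ζ (γ x) j} : ℝ) / Fintype.card Ω := by
  have : Nonempty Γ := ‹Nonempty Ω›.map γ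
  have : Nonempty κ := ‹Nonempty Ω›.map (Z 0)
  let w (g : Γ) (j : ℕ) (z : κ) : ℝ := if z = ζ g j then 1 else η / Fintype.card κ
  have hw (g j z) : 0 < w g j z := by unfold w; split_ifs <;> positivity
  have hw_sum (g : Γ) (j : ℕ) : ∑ z, w g j z ≤ 1 + η :=
    calc ∑ z, w g j z ≤ ∑ z, ((if z = ζ g j then 1 else 0) + η / Fintype.card κ) :=
          sum_le_sum fun z _ ↦ by
            have : 0 < η / Fintype.card κ := by positivity
            unfold w
            split_ifs <;> linarith
      _ = 1 + η := by
          rw [sum_add_distrib, sum_ite_eq' univ, if_pos (mem_univ _), sum_const, card_univ,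
            nsmul_eq_mul, mul_div_cancel₀ _ (by positivity)]
  have h_log : Real.log (∑ g, ∏ j ∈ Q, ∑ z, w g j z) ≤
      Real.log (Fintype.card Γ) + #Q * Real.log (1 + η) := by
    rw [← Real.log_pow, ← Real.log_mul (by positivity) (by positivity)]
    refine Real.log_le_log (sum_pos (fun g _ ↦ prod_pos fun j _ ↦ sum_pos (fun z _ ↦ hw g j z)
      univ_nonempty) univ_nonempty) ?_
    simpa using sum_le_card_nsmul univ (fun g ↦ ∏ j ∈ Q, ∑ z, w g j z) _ fun g _ ↦
      (prod_le_prod (fun j _ ↦ sum_nonneg fun z _ ↦ (hw g j z).le) fun j _ ↦ hw_sum g j).trans_eq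
        (prod_const _)
  have h_error : -𝔼 x, ∑ j ∈ Q, Real.log (w (γ x) j (Z j x)) = Real.log (Fintype.card κ / η) *
      ∑ j ∈ Q, (#{x | Z j x ≠ ζ (γ x) j} : ℝ) / Fintype.card Ω := by
    have (x : Ω) (j : ℕ) : -Real.log (w (γ x) j (Z j x)) =
        Real.log (Fintype.card κ / η) * if Z j x ≠ ζ (γ x) j then 1 else 0 := by
      by_cases h : Z j x = ζ (γ x) j <;> simp [w, h, ← Real.log_inv]
    rw [expect_sum_comm, ← sum_neg_distrib, mul_sum]
    refine sum_congr rfl fun j _ ↦ ?_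
    rw [← expect_neg_distrib, expect_congr rfl fun x _ ↦ this x j, ← mul_expect,
      Fintype.expect_eq_sum_div_card, sum_boole]
  linarith [sum_condEntropy_le_log_sub_expect Z hw γ Q]

end ConditionalEntropy

section Translates

open Finset

variable {S : Finset ℕ} {D : ℕ} {f : ℕ → ℝ} {c : ℝ}

lemma card_mul_sum_range_sub_le_sum_translates (hS : ∀ s ∈ S, s ≤ D) (hf : ∀ j, 0 ≤ f j)
    (hc : ∀ j, f j ≤ c) (L : ℕ) :
    #S * (∑ j ∈ range L, f j - D * c) ≤ ∑ a ∈ range L, ∑ s ∈ S, f (a + s) := by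
  rw [sum_comm, ← nsmul_eq_mul]
  refine card_nsmul_le_sum _ _ _ fun s hs ↦ ?_
  have h_head : ∑ j ∈ range s, f j ≤ D * c :=
    calc ∑ j ∈ range s, f j ≤ s * c := by simpa using sum_le_card_nsmul (range s) f c fun j _ ↦ hc j
      _ ≤ D * c := by have := (hf 0).trans (hc 0); gcongr; exact hS s hs
  have h_extend : ∑ j ∈ range L, f j ≤ ∑ j ∈ range (s + L), f j :=
    sum_le_sum_of_subset_of_nonneg (range_mono le_add_self) fun j _ _ ↦ hf j
  rw [sum_range_add] at h_extend
  simp_rw [add_comm _ s]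
  linarith

lemma sum_translates_le_card_mul_sum_range (hS : ∀ s ∈ S, s ≤ D) (hf : ∀ j, 0 ≤ f j) (L : ℕ) :
    ∑ a ∈ range L, ∑ s ∈ S, f (a + s) ≤ #S * ∑ j ∈ range (L + D), f j := by
  rw [sum_comm, ← nsmul_eq_mul]
  refine sum_le_card_nsmul _ _ _ fun s hs ↦ ?_
  calc ∑ a ∈ range L, f (a + s) ≤ ∑ j ∈ range s, f j + ∑ a ∈ range L, f (s + a) := by
        simp_rw [add_comm _ s]
        exact le_add_of_nonneg_left (sum_nonneg fun j _ ↦ hf j)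
    _ = ∑ j ∈ range (s + L), f j := (sum_range_add ..).symm
    _ ≤ ∑ j ∈ range (L + D), f j := sum_le_sum_of_subset_of_nonneg
        (range_mono (by have := hS s hs; omega)) fun j _ _ ↦ hf j

/-- Shearer's inequality for the translates of `S`, allowing for decoding errors. -/
lemma card_mul_log_card_sub_le_of_decoder {Ω κ Γ : Type*} [Fintype Ω] [Nonempty Ω] [Fintype κ]
    [Fintype Γ] {Z : ℕ → Ω → κ} {L : ℕ}
    (hZ : ∀ x y, (∀ j < L, Z j x = Z j y) → x = y) (hS : ∀ s ∈ S, s ≤ D)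
    (γ : ℕ → Ω → Γ) (ζ : Γ → ℕ → κ) (bad : ℕ → Finset Ω)
    (h_bad : ∀ a, ∀ s ∈ S, ∀ x, Z (a + s) x ≠ ζ (γ a x) s → x ∈ bad (a + s))
    {η : ℝ} (hη : 0 < η) (hη1 : η ≤ 1) :
    #S * (Real.log (Fintype.card Ω) - D * Real.log (Fintype.card κ)) ≤
      L * (Real.log (Fintype.card Γ) + #S * Real.log (1 + η)) + Real.log (Fintype.card κ / η) *
        (#S * ∑ j ∈ range (L + D), (#(bad j) : ℝ) / Fintype.card Ω) := by
  classical
  have : Nonempty κ := ‹Nonempty Ω›.map (Z 0)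
  have h_log : 0 ≤ Real.log (Fintype.card κ / η) := Real.log_nonneg <| (one_le_div hη).2 <|
    hη1.trans (by exact_mod_cast Fintype.card_pos (α := κ))
  have h_decode (a : ℕ) : ∑ s ∈ S, condEntropy Z (a + s) ≤
      Real.log (Fintype.card Γ) + #S * Real.log (1 + η) + Real.log (Fintype.card κ / η) *
        ∑ s ∈ S, (#(bad (a + s)) : ℝ) / Fintype.card Ω := by
    have := sum_condEntropy_le_of_decoder Z (γ a) (fun g j ↦ ζ g (j - a)) hη
      (S.map (addLeftEmbedding a))
    simp only [sum_map, card_map, addLeftEmbedding_apply, add_tsub_cancel_left] at this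
    refine this.trans (by gcongr with s hs; exact fun x hx ↦ h_bad a s hs x (by simpa using hx))
  calc _ = #S * (∑ j ∈ range L, condEntropy Z j - D * Real.log (Fintype.card κ)) := by
        rw [sum_range_condEntropy_of_injective Z hZ]
    _ ≤ ∑ a ∈ range L, ∑ s ∈ S, condEntropy Z (a + s) := card_mul_sum_range_sub_le_sum_translates
        hS (condEntropy_nonneg Z) (condEntropy_le_log_card Z) L
    _ ≤ _ := sum_le_sum fun a _ ↦ h_decode a
    _ = L * (Real.log (Fintype.card Γ) + #S * Real.log (1 + η)) + Real.log (Fintype.card κ / η) *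
          ∑ a ∈ range L, ∑ s ∈ S, (#(bad (a + s)) : ℝ) / Fintype.card Ω := by
        rw [sum_add_distrib, sum_const, card_range, nsmul_eq_mul, ← mul_sum]
    _ ≤ _ := by
        gcongr
        exact sum_translates_le_card_mul_sum_range (f := fun j ↦ (#(bad j) : ℝ) / Fintype.card Ω) hS
          (fun _ ↦ by positivity) L

end Translates

section BowenEntourage

open Finset
open scoped Pointwise SetRel Uniformity

/-- The pairs of points whose orbits stay `ε`-close at all times in `F`, so that `spaN T F ε` is the
covering number of `X` at this entourage. -/
def bowenEntourage (T : X → X) (F : Finset ℕ) (ε : ℝ) : SetRel X X :=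
  {p | ∀ i ∈ F, dist (T^[i] p.1) (T^[i] p.2) ≤ ε}

variable {T : X → X} {F F' : Finset ℕ} {ε ε' : ℝ} {x y z : X}

lemma mem_bowenEntourage :
    x ~[bowenEntourage T F ε] y ↔ ∀ i ∈ F, dist (T^[i] x) (T^[i] y) ≤ ε := .rfl

lemma bowenEntourage_symm (h : x ~[bowenEntourage T F ε] y) : y ~[bowenEntourage T F ε] x :=
  fun i hi ↦ dist_comm (T^[i] x) _ ▸ h i hi

lemma bowenEntourage_trans (hxy : x ~[bowenEntourage T F ε] y)
    (hyz : y ~[bowenEntourage T F ε'] z) : x ~[bowenEntourage T F (ε + ε')] z :=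
  fun i hi ↦ (dist_triangle ..).trans (add_le_add (hxy i hi) (hyz i hi))

lemma mem_bowenEntourage_add : x ~[bowenEntourage T (F + F') ε] y ↔
    ∀ i ∈ F, T^[i] x ~[bowenEntourage T F' ε] T^[i] y := by
  simp only [mem_bowenEntourage, Finset.mem_add, ← Function.iterate_add_apply]
  exact ⟨fun h i hi j hj ↦ add_comm i j ▸ h _ ⟨i, hi, j, hj, rfl⟩,
    fun h _ ⟨i, hi, j, hj, hk⟩ ↦ hk ▸ add_comm j i ▸ h i hi j hj⟩

lemma bowenEntourage_anti (h : F ⊆ F') : bowenEntourage T F' ε ⊆ bowenEntourage T F ε :=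
  fun _ hp i hi ↦ hp i (h hi)

lemma bowenEntourage_mono (h : ε ≤ ε') : bowenEntourage T F ε ⊆ bowenEntourage T F ε' :=
  fun _ hp i hi ↦ (hp i hi).trans h

lemma spaN_le_card {E : Finset X} (hE : (bowenEntourage T F ε).IsCover Set.univ E) :
    spaN T F ε ≤ #E :=
  Nat.sInf_le ⟨E, rfl, fun x ↦ hE (Set.mem_univ x)⟩

variable [CompactSpace X]

lemma bowenEntourage_mem_uniformity (hT : Continuous T) (F : Finset ℕ) (hε : 0 < ε) :
    bowenEntourage T F ε ∈ 𝓤 X :=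
  (eventually_all_finset F).2 fun i _ ↦
    (CompactSpace.uniformContinuous_of_continuous (hT.iterate i)).eventually
      (Metric.uniformity_basis_dist_le.mem_of_mem hε)

lemma exists_isCover_bowenEntourage (hT : Continuous T) (F : Finset ℕ) (hε : 0 < ε) :
    ∃ E : Finset X, (bowenEntourage T F ε).IsCover Set.univ E := by
  obtain ⟨E, hE, h_cover⟩ :=
    isCompact_univ.totallyBounded _ (bowenEntourage_mem_uniformity hT F hε)
  exact ⟨hE.toFinset, fun x hx ↦ by simpa using h_cover hx⟩

lemma exists_isCover_card_eq_spaN (hT : Continuous T) (F : Finset ℕ) (hε : 0 < ε) :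
    ∃ E : Finset X, (bowenEntourage T F ε).IsCover Set.univ E ∧ #E = spaN T F ε := by
  obtain ⟨E, hE⟩ := exists_isCover_bowenEntourage hT F hε
  obtain ⟨E', h_card, hE'⟩ := Nat.sInf_mem
    (⟨#E, E, rfl, fun x ↦ hE (Set.mem_univ x)⟩ : {k : ℕ | ∃ E : Finset X, #E = k ∧
      ∀ x : X, ∃ e ∈ E, ∀ i ∈ F, dist (T^[i] x) (T^[i] e) ≤ ε}.Nonempty)
  exact ⟨E', fun x _ ↦ hE' x, h_card⟩

lemma spaN_pos [Nonempty X] (hT : Continuous T) (F : Finset ℕ) (hε : 0 < ε) :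
    0 < spaN T F ε := by
  obtain ⟨E, hE, h_card⟩ := exists_isCover_card_eq_spaN hT F hε
  exact h_card ▸ card_pos.2 (coe_nonempty.1 (hE.nonempty Set.univ_nonempty))

lemma spaN_mono (hT : Continuous T) (h : F ⊆ F') (hε : 0 < ε) : spaN T F ε ≤ spaN T F' ε := by
  obtain ⟨E, hE, h_card⟩ := exists_isCover_card_eq_spaN hT F' hε
  exact h_card ▸ spaN_le_card (hE.mono_entourage (bowenEntourage_anti h))

lemma exists_forall_spaN_add_le (hT : Continuous T) (G : Finset ℕ) (hε : 0 < ε) :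
    ∃ δ > 0, ∀ F, spaN T (F + G) ε ≤ spaN T F δ := by
  obtain ⟨δ, hδ, h_close⟩ :=
    Metric.uniformity_basis_dist_le.mem_iff.1 (bowenEntourage_mem_uniformity hT G hε)
  refine ⟨δ, hδ, fun F ↦ ?_⟩
  obtain ⟨E, hE, h_card⟩ := exists_isCover_card_eq_spaN hT F hδ
  exact h_card ▸ spaN_le_card (hE.mono_entourage fun ⟨_, _⟩ hp ↦
    mem_bowenEntourage_add.2 fun i hi ↦ h_close (hp i hi))

lemma exists_isSeparated_isCover_bowenEntourage (hT : Continuous T) (F : Finset ℕ) (hε : 0 < ε) :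
    ∃ E : Finset X, (bowenEntourage T F ε).IsSeparated E ∧
      (bowenEntourage T F (ε + ε)).IsCover Set.univ E := by
  obtain ⟨P, hP⟩ := exists_isCover_bowenEntourage hT F hε
  obtain ⟨E, -, hE⟩ := (P.finite_toSet.finite_subsets.subset fun _ h ↦ h.1).exists_le_maximal
    (s := {N | N ⊆ (P : Set X) ∧ (bowenEntourage T F ε).IsSeparated N})
    ⟨Set.empty_subset _, SetRel.IsSeparated.empty⟩
  have : (bowenEntourage T F ε).IsRefl := ⟨fun x i _ ↦ (dist_self (T^[i] x)).trans_le hε.le⟩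
  have : (bowenEntourage T F ε).IsSymm := ⟨fun _ _ ↦ bowenEntourage_symm⟩
  have h_cover := SetRel.IsCover.of_maximal_isSeparated hE
  lift E to Finset X using P.finite_toSet.subset hE.prop.1
  refine ⟨E, hE.prop.2, fun x hx ↦ ?_⟩
  obtain ⟨p, hp, hxp⟩ := hP hx
  obtain ⟨e, he, hpe⟩ := h_cover hp
  exact ⟨e, he, bowenEntourage_trans hxp hpe⟩

end BowenEntourage

section UpperBound

open Finset
open scoped Pointwise SetRel

lemma exists_subset_add_range_card_mul_le {m : ℕ} (hm : 0 < m) (F : Finset ℕ) :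
    ∃ B ⊆ F, F ⊆ B + range m ∧ #B * m ≤ #(B + range m) := by
  induction F using Finset.induction_on_max with
  | empty => exact ⟨∅, by simp⟩
  | insert a F h_max ih =>
    obtain ⟨B, hBF, hFB, h_card⟩ := ih
    by_cases ha : a ∈ B + range m
    · exact ⟨B, hBF.trans (subset_insert _ _), insert_subset ha hFB, h_card⟩
    have h_sep (b) (hb : b ∈ B) : b + m ≤ a := by
      by_contra! h
      exact ha (Finset.mem_add.2 ⟨b, hb, a - b, mem_range.2 (by omega),
        Nat.add_sub_cancel' (h_max b (hBF hb)).le⟩)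
    have h_disj : Disjoint ({a} + range m) (B + range m) := by
      simp only [disjoint_left, Finset.mem_add, mem_singleton, mem_range]
      rintro _ ⟨_, rfl, i, -, rfl⟩ ⟨b, hb, j, hj, hbj⟩
      have := h_sep b hb
      omega
    have haB : a ∉ B := fun h ↦ by have := h_sep a h; omega
    refine ⟨insert a B, insert_subset_insert a hBF, insert_subset ?_ ?_, ?_⟩
    · exact Finset.mem_add.2 ⟨a, mem_insert_self a B, 0, mem_range.2 hm, add_zero a⟩
    · exact hFB.trans (add_subset_add_right (subset_insert a B))
    · rw [insert_eq, union_add, card_union_of_disjoint h_disj, ← insert_eq,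
        card_insert_of_notMem haB, card_singleton_add, card_range]
      linarith

variable [CompactSpace X] [Nonempty X] {T : X → X} {ε : ℝ}

lemma spaN_add_le_pow_card (hT : Continuous T) (B F : Finset ℕ) (hε : 0 < ε) :
    spaN T (B + F) (ε + ε) ≤ spaN T F ε ^ #B := by
  classical
  obtain ⟨P, hP, h_card⟩ := exists_isCover_card_eq_spaN hT F hε
  choose! center h_center h_close using fun x ↦ hP (Set.mem_univ x)
  let itinerary (x : X) (b : B) : P := ⟨center (T^[b] x), h_center _⟩
  have h_rep (x : X) : itinerary (Function.invFun itinerary (itinerary x)) = itinerary x :=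
    Function.invFun_eq ⟨x, rfl⟩
  have h_cover : (bowenEntourage T (B + F) (ε + ε)).IsCover Set.univ
      (univ.image (Function.invFun itinerary) : Finset X) := fun x _ ↦ by
    refine ⟨_, mem_coe.2 (mem_image_of_mem _ (mem_univ (itinerary x))),
      mem_bowenEntourage_add.2 fun b hb ↦ ?_⟩
    have h_center : center (T^[b] _) = center (T^[b] x) :=
      congrArg Subtype.val (congrFun (h_rep x) ⟨b, hb⟩)
    exact bowenEntourage_trans (h_close _) (h_center ▸ bowenEntourage_symm (h_close _))
  calc spaN T (B + F) (ε + ε) ≤ #(univ.image (Function.invFun itinerary)) := spaN_le_card h_cover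
    _ ≤ #(univ : Finset (B → P)) := card_image_le
    _ = spaN T F ε ^ #B := by simp [h_card]

lemma log_spaN_le_card_mul (hT : Continuous T) (F : Finset ℕ) {m : ℕ} (hm : 0 < m) (hε : 0 < ε) :
    Real.log (spaN T F (ε + ε)) ≤ #(F + range m) * (Real.log (spaN T (range m) ε) / m) := by
  obtain ⟨B, hBF, hFB, h_card⟩ := exists_subset_add_range_card_mul_le hm F
  have h_card : (#B : ℝ) ≤ #(F + range m) / m := by
    rw [le_div_iff₀ (by positivity)]
    exact_mod_cast h_card.trans (card_le_card (add_subset_add_right hBF))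
  calc Real.log (spaN T F (ε + ε)) ≤ Real.log ((spaN T (range m) ε : ℝ) ^ #B) := by
        refine Real.log_le_log (by exact_mod_cast spaN_pos hT F (add_pos hε hε)) ?_
        exact_mod_cast (spaN_mono hT hFB (add_pos hε hε)).trans
          (spaN_add_le_pow_card hT B (range m) hε)
    _ = #B * Real.log (spaN T (range m) ε) := Real.log_pow ..
    _ ≤ #(F + range m) / m * Real.log (spaN T (range m) ε) := by gcongr
    _ = #(F + range m) * (Real.log (spaN T (range m) ε) / m) := by ring

end UpperBound

section LowerBound

open Finset
open scoped Pointwise SetRel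

lemma exists_radius_card_close_le {ι : Type*} (s : Finset ι) (v : ι → ℝ) (a : ℝ) {δ : ℝ}
    (hδ : 0 < δ) {R : ℕ} (hR : 0 < R) :
    ∃ r ∈ Set.Icc a (a + 3 * δ * R), (#{i ∈ s | |v i - r| ≤ δ} : ℝ) ≤ #s / R := by
  obtain ⟨l, hl, h_card⟩ := exists_card_fiber_le_of_card_le_nsmul (s := s) (t := Ico (0 : ℤ) R)
    (f := fun i ↦ ⌊(v i - a + δ) / (3 * δ)⌋) (b := (#s / R : ℝ)) (by simpa using hR)
    (by rw [Int.card_Ico, sub_zero, Int.toNat_natCast, nsmul_eq_mul]; field_simp; rfl)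
  obtain ⟨hl0, hlR⟩ := mem_Ico.1 hl
  have hl0 : (0 : ℝ) ≤ l := by exact_mod_cast hl0
  have hlR : (l : ℝ) ≤ R := by exact_mod_cast hlR.le
  refine ⟨a + 3 * δ * l, ⟨le_add_of_nonneg_right (mul_nonneg (by positivity) hl0), by gcongr⟩,
    le_trans ?_ h_card⟩
  gcongr with i
  intro h_close
  obtain ⟨h_lower, h_upper⟩ := abs_le.1 h_close
  rw [Int.floor_eq_iff, le_div_iff₀ (by positivity), div_lt_iff₀ (by positivity)]
  constructor <;> linarith

lemma exists_radius_sum_card_close_le {Ω ι : Type*} [Fintype Ω] [Fintype ι] (v : ℕ → Ω → ι → ℝ)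
    (N : ℕ) (a : ℝ) {δ : ℝ} (hδ : 0 < δ) {R : ℕ} (hR : 0 < R) :
    ∃ r ∈ Set.Icc a (a + 3 * δ * R),
      ∑ j ∈ range N, (#{x | ∃ i, |v j x i - r| ≤ δ} : ℝ) / Fintype.card Ω ≤
        N * Fintype.card ι / R := by
  classical
  obtain ⟨r, hr, h_card⟩ := exists_radius_card_close_le (range N ×ˢ (univ : Finset (Ω × ι)))
    (fun p ↦ v p.1 p.2.1 p.2.2) a hδ hR
  refine ⟨r, hr, ?_⟩
  have h_image : ∑ j ∈ range N, #{x | ∃ i, |v j x i - r| ≤ δ} ≤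
      #{p ∈ range N ×ˢ (univ : Finset (Ω × ι)) | |v p.1 p.2.1 p.2.2 - r| ≤ δ} := by
    rw [← card_sigma]
    refine card_le_card_of_surjOn (fun p ↦ ⟨p.1, p.2.1⟩) ?_
    rintro ⟨j, x⟩ hx
    simp only [coe_sigma, Set.mem_sigma_iff, mem_coe, mem_filter_univ] at hx
    obtain ⟨hj, i, hi⟩ := hx
    exact ⟨(j, x, i), by simpa [hi] using hj, rfl⟩
  rw [← sum_div]
  refine div_le_of_le_mul₀ (Nat.cast_nonneg _) (by positivity) ?_
  calc ∑ j ∈ range N, (#{x | ∃ i, |v j x i - r| ≤ δ} : ℝ)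
      ≤ #{p ∈ range N ×ˢ (univ : Finset (Ω × ι)) | |v p.1 p.2.1 p.2.2 - r| ≤ δ} := by
        exact_mod_cast h_image
    _ ≤ #(range N ×ˢ (univ : Finset (Ω × ι))) / R := h_card
    _ = N * Fintype.card ι / R * Fintype.card Ω := by
        rw [card_product, card_range, card_univ, Fintype.card_prod]
        push_cast
        ring

/-- The set of points of `C` whose closed `r`-ball contains `y`: the letter recorded when an orbit
visits `y`, in the coding of orbits over the finite alphabet `Finset C`. -/
noncomputable def ballCode (C : Finset X) (r : ℝ) (y : X) : Finset C := {c | dist y c ≤ r}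

variable {C : Finset X} {r δ : ℝ} {y z : X}

lemma mem_ballCode {c : C} : c ∈ ballCode C r y ↔ dist y c ≤ r := by
  simp only [ballCode, mem_filter_univ]

lemma ballCode_eq_of_dist_le (h : dist y z ≤ δ) (hy : ∀ c : C, δ < |dist y c - r|) :
    ballCode C r y = ballCode C r z := by
  ext c
  have := dist_triangle y z c
  have := dist_triangle_left z (c : X) y
  rw [mem_ballCode, mem_ballCode]
  rcases lt_abs.1 (hy c) with h_out | h_in <;> constructor <;> intro <;> linarith

lemma dist_le_of_ballCode_eq (hC : ∀ x, ∃ c ∈ C, dist x c ≤ r)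
    (h : ballCode C r y = ballCode C r z) : dist y z ≤ r + r := by
  obtain ⟨c, hc, hyc⟩ := hC y
  have hzc : dist z c ≤ r := mem_ballCode.1 (h ▸ mem_ballCode.2 hyc : ⟨c, hc⟩ ∈ ballCode C r z)
  exact (dist_triangle_right y z c).trans (add_le_add hyc hzc)

variable {T : X → X} {S : Finset ℕ} {D L : ℕ} {η : ℝ}

lemma card_mul_log_card_sub_le_of_isSeparated (hC : ∀ x, ∃ c ∈ C, dist x c ≤ r) {E G : Finset X}
    (hE_nonempty : E.Nonempty) (hE : (bowenEntourage T (range L) (r + r)).IsSeparated E)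
    (hG : (bowenEntourage T S δ).IsCover Set.univ G) (hS : ∀ s ∈ S, s ≤ D)
    (hη : 0 < η) (hη1 : η ≤ 1) :
    #S * (Real.log #E - D * Real.log (2 ^ #C)) ≤ L * (Real.log #G + #S * Real.log (1 + η)) +
      Real.log (2 ^ #C / η) * (#S * ∑ j ∈ range (L + D),
        (#{x : E | ∃ c : C, |dist (T^[j] (x : X)) c - r| ≤ δ} : ℝ) / #E) := by
  classical
  have : Nonempty E := hE_nonempty.to_subtype
  choose center h_center h_close using fun x ↦ hG (Set.mem_univ x)
  have h_code_inj (x y : E)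
      (h : ∀ j < L, ballCode C r (T^[j] (x : X)) = ballCode C r (T^[j] (y : X))) : x = y := by
    by_contra hxy
    exact hE x.2 y.2 (Subtype.coe_ne_coe.2 hxy) fun j hj ↦
      dist_le_of_ballCode_eq hC (h j (mem_range.1 hj))
  simpa using card_mul_log_card_sub_le_of_decoder
    (Z := fun j (x : E) ↦ ballCode C r (T^[j] (x : X))) h_code_inj hS
    (fun a x ↦ (⟨center (T^[a] x), h_center _⟩ : G)) (fun g s ↦ ballCode C r (T^[s] (g : X)))
    (fun j ↦ {x : E | ∃ c : C, |dist (T^[j] (x : X)) c - r| ≤ δ})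
    (fun a s hs x ↦ by
      contrapose!
      intro h_far
      simp only [mem_filter_univ, not_exists, not_le] at h_far
      refine ballCode_eq_of_dist_le ?_ h_far
      rw [add_comm, Function.iterate_add_apply]
      exact h_close _ s hs) hη hη1

variable [CompactSpace X] [Nonempty X]

lemma card_mul_log_spaN_range_sub_le (hT : Continuous T) {ρ : ℝ} (hρ : 0 < ρ)
    (hC : ∀ x, ∃ c ∈ C, dist x c ≤ ρ) {R : ℕ} (hR : 0 < R) (hS : ∀ s ∈ S, s ≤ D) (L : ℕ)
    (hη : 0 < η) (hη1 : η ≤ 1) :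
    #S * (Real.log (spaN T (range L) (8 * ρ)) - D * Real.log (2 ^ #C)) ≤
      L * (Real.log (spaN T S (ρ / (3 * R))) + #S * Real.log (1 + η)) +
        Real.log (2 ^ #C / η) * (#S * ((L + D) * #C / R)) := by
  have hδ : 0 < ρ / (3 * R) := by positivity
  obtain ⟨E, h_sep, h_cover⟩ :=
    exists_isSeparated_isCover_bowenEntourage hT (range L) (by positivity : 0 < 4 * ρ)
  obtain ⟨G, hG, hG_card⟩ := exists_isCover_card_eq_spaN hT S hδ
  have hE : E.Nonempty := coe_nonempty.1 (h_cover.nonempty Set.univ_nonempty)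
  obtain ⟨r, ⟨hρr, hr⟩, h_near⟩ := exists_radius_sum_card_close_le
    (fun j (x : E) (c : C) ↦ dist (T^[j] (x : X)) c) (L + D) ρ hδ hR
  rw [show ρ + 3 * (ρ / (3 * R)) * R = 2 * ρ by field_simp; ring] at hr
  have h_log : 0 ≤ Real.log (2 ^ #C / η) :=
    Real.log_nonneg ((one_le_div hη).2 (hη1.trans (one_le_pow₀ one_le_two)))
  have h_spaN : (spaN T (range L) (8 * ρ) : ℝ) ≤ #E := by
    rw [show 8 * ρ = 4 * ρ + 4 * ρ by ring]
    exact_mod_cast spaN_le_card h_cover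
  calc _ ≤ #S * (Real.log #E - D * Real.log (2 ^ #C)) := by
        gcongr
        exact_mod_cast spaN_pos hT (range L) (by positivity : 0 < 8 * ρ)
    _ ≤ _ := card_mul_log_card_sub_le_of_isSeparated
        (fun x ↦ (hC x).imp fun c hc ↦ ⟨hc.1, hc.2.trans hρr⟩) hE
        (h_sep.mono_left (bowenEntourage_mono (by linarith))) hG hS hη hη1
    _ ≤ _ := by
        rw [hG_card]
        gcongr
        simpa using h_near

lemma exists_forall_card_mul_log_spaN_range_le (hT : Continuous T) {ε : ℝ} (hε : 0 < ε) {θ : ℝ}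
    (hθ : 0 < θ) :
    ∃ δ > 0, ∀ S : Finset ℕ, ∃ M, ∀ L : ℕ,
      #S * Real.log (spaN T (range L) ε) ≤ L * (Real.log (spaN T S δ) + #S * θ) + M := by
  obtain ⟨C, hC⟩ := exists_isCover_bowenEntourage hT {0} (by positivity : 0 < ε / 8)
  have hC (x : X) : ∃ c ∈ C, dist x c ≤ ε / 8 := by
    obtain ⟨c, hc, hxc⟩ := hC (Set.mem_univ x)
    exact ⟨c, hc, hxc 0 (mem_singleton_self 0)⟩
  obtain ⟨η, hη, hηθ, hη1⟩ : ∃ η > 0, η ≤ θ / 2 ∧ η ≤ 1 :=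
    ⟨min (θ / 2) 1, lt_min (half_pos hθ) one_pos, min_le_left .., min_le_right ..⟩
  have h_log : Real.log (1 + η) ≤ θ / 2 :=
    (Real.log_le_sub_one_of_pos (by positivity)).trans (by linarith)
  obtain ⟨R, hR_large, hR⟩ := ((tendsto_natCast_atTop_atTop.eventually_ge_atTop
    (Real.log (2 ^ #C / η) * #C / (θ / 2))).and (eventually_gt_atTop 0)).exists
  have h_error : Real.log (2 ^ #C / η) * #C / R ≤ θ / 2 :=
    (div_le_comm₀ (half_pos hθ) (by positivity)).1 hR_large
  refine ⟨ε / 8 / (3 * R), by positivity, fun S ↦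
    ⟨#S * (S.sup id * (Real.log (2 ^ #C) + θ / 2)), fun L ↦ ?_⟩⟩
  have h := card_mul_log_spaN_range_sub_le hT (S := S) (by positivity) hC hR
    (fun s hs ↦ le_sup (f := id) hs) L hη hη1
  rw [mul_div_cancel₀ ε (by norm_num)] at h
  have h_error : Real.log (2 ^ #C / η) * (#S * ((L + S.sup id) * #C / R)) ≤
      #S * (L + S.sup id) * (θ / 2) :=
    calc _ = #S * (L + S.sup id) * (Real.log (2 ^ #C / η) * #C / R) := by ring
      _ ≤ _ := by gcongr
  have h_log : L * (#S * Real.log (1 + η)) ≤ L * (#S * (θ / 2)) := by gcongr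
  linarith

end LowerBound

section Rates

open Finset
open scoped Pointwise

lemma frequently_mul_lt_of_lt_limsup_div {u : ℕ → ℝ} {c : ℝ}
    (h : (c : EReal) < limsup (fun n ↦ ((u n / n : ℝ) : EReal)) atTop) :
    ∃ᶠ n : ℕ in atTop, c * n < u n :=
  ((frequently_lt_of_lt_limsup (by isBoundedDefault) h).and_eventually
    (eventually_gt_atTop 0)).mono fun _ ⟨hn, hn0⟩ ↦
      (lt_div_iff₀ (Nat.cast_pos.2 hn0)).1 (EReal.coe_lt_coe_iff.1 hn)

lemma le_limsup_div_of_frequently_mul_le {u : ℕ → ℝ} {c : ℝ}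
    (h : ∃ᶠ n : ℕ in atTop, c * n ≤ u n) :
    (c : EReal) ≤ limsup (fun n ↦ ((u n / n : ℝ) : EReal)) atTop :=
  le_limsup_of_frequently_le <| (h.and_eventually (eventually_gt_atTop 0)).mono
    fun _ ⟨hn, hn0⟩ ↦ EReal.coe_le_coe_iff.2 ((le_div_iff₀ (Nat.cast_pos.2 hn0)).2 hn)

lemma limsup_le_seqEntTop (T : X → X) (A : ℕ → ℕ) {ε : ℝ} (hε : 0 < ε) :
    limsup (fun n : ℕ ↦ ((Real.log (spaN T ((Icc 1 n).image A) ε) / n : ℝ) : EReal)) atTop ≤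
      seqEntTop T A :=
  le_iSup₂_of_le ε hε le_rfl

lemma limsup_le_KA (A : ℕ → ℕ) (m : ℕ) :
    limsup (fun n : ℕ ↦ ((#((Icc 1 n).image A + range m) / n : ℝ) : EReal)) atTop ≤ KA A :=
  le_iSup_of_le m le_rfl

lemma seqEntTop_nonneg (T : X → X) (A : ℕ → ℕ) : 0 ≤ seqEntTop T A :=
  (le_limsup_div_of_frequently_mul_le (c := 0) <| .of_forall fun _ ↦ by
    rw [zero_mul]; exact Real.log_natCast_nonneg _).trans (limsup_le_seqEntTop T A one_pos)

lemma KA_nonneg (A : ℕ → ℕ) : 0 ≤ KA A :=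
  (le_limsup_div_of_frequently_mul_le (c := 0) <| .of_forall fun _ ↦ by
    rw [zero_mul]; positivity).trans (limsup_le_KA A 0)

lemma htopN_eq_iSup_limsup (T : X → X) : htopN T = ⨆ (ε : ℝ) (_ : 0 < ε),
    limsup (fun n : ℕ ↦ ((Real.log (spaN T (range n) ε) / n : ℝ) : EReal)) atTop := by
  have h_image (n : ℕ) : (Icc 1 n).image (· - 1) = range n := by
    ext i
    simp only [mem_image, mem_Icc, mem_range]
    exact ⟨fun ⟨k, hk, h⟩ ↦ by omega, fun hi ↦ ⟨i + 1, by omega, rfl⟩⟩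
  simp_rw [htopN, seqEntTop, h_image]

end Rates

section EntropyFormula

open Finset
open scoped Pointwise

variable [CompactSpace X] [Nonempty X] {T : X → X}

lemma exists_forall_card_mul_le_log_spaN (hT : Continuous T) {b : ℝ} (hb : b < htopN T) :
    ∃ δ > 0, ∀ S : Finset ℕ, #S * b ≤ Real.log (spaN T S δ) := by
  obtain ⟨ε, hε, hb⟩ : ∃ ε : ℝ, ∃ _ : 0 < ε, (b : EReal) <
      limsup (fun n : ℕ ↦ ((Real.log (spaN T (range n) ε) / n : ℝ) : EReal)) atTop := by
    simpa only [htopN_eq_iSup_limsup, lt_iSup_iff] using hb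
  obtain ⟨b', hbb', hb'⟩ := EReal.lt_iff_exists_real_btwn.1 hb
  obtain ⟨δ, hδ, h⟩ := exists_forall_card_mul_log_spaN_range_le hT hε
    (sub_pos.2 (EReal.coe_lt_coe_iff.1 hbb'))
  refine ⟨δ, hδ, fun S ↦ ?_⟩
  obtain ⟨M, hM⟩ := h S
  by_contra! h_lt
  obtain ⟨L, h_large, hL⟩ := (((tendsto_natCast_atTop_atTop.atTop_mul_const
    (sub_pos.2 h_lt)).eventually_gt_atTop M).and_frequently
      (frequently_mul_lt_of_lt_limsup_div hb')).exists
  have : #S * (b' * L) ≤ #S * Real.log (spaN T (range L) ε) := by gcongr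
  linarith [hM L]

lemma KA_mul_htopN_le_seqEntTop (hT : Continuous T) (A : ℕ → ℕ) :
    KA A * htopN T ≤ seqEntTop T A := by
  refine EReal.mul_le_of_forall_lt_of_nonneg (KA_nonneg A) (seqEntTop_nonneg T A) ?_
  rintro a ⟨ha, haK⟩ b ⟨hb, hbh⟩
  lift a to ℝ using ⟨haK.ne_top, ha.ne_bot⟩
  lift b to ℝ using ⟨hbh.ne_top, hb.ne_bot⟩
  obtain ⟨m, ham⟩ := lt_iSup_iff.1 haK
  obtain ⟨δ, hδ, h_card⟩ := exists_forall_card_mul_le_log_spaN hT hbh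
  obtain ⟨δ', hδ', h_thicken⟩ := exists_forall_spaN_add_le hT (range m) hδ
  rw [← EReal.coe_mul]
  refine (le_limsup_div_of_frequently_mul_le <|
    (frequently_mul_lt_of_lt_limsup_div ham).mono fun n hn ↦ ?_).trans
      (limsup_le_seqEntTop T A hδ')
  set F := (Icc 1 n).image A
  calc a * b * n = a * n * b := by ring
    _ ≤ #(F + range m) * b := by
        have : 0 ≤ b := (EReal.coe_pos.1 hb).le
        gcongr
    _ ≤ Real.log (spaN T (F + range m) δ) := h_card _
    _ ≤ Real.log (spaN T F δ') := Real.log_le_log (Nat.cast_pos.2 (spaN_pos hT _ hδ))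
        (Nat.cast_le.2 (h_thicken F))

lemma limsup_log_spaN_le_KA_mul (hT : Continuous T) (A : ℕ → ℕ) {m : ℕ} (hm : 0 < m) {ε : ℝ}
    (hε : 0 < ε) :
    limsup (fun n : ℕ ↦ ((Real.log (spaN T ((Icc 1 n).image A) (ε + ε)) / n : ℝ) : EReal)) atTop ≤
      KA A * (Real.log (spaN T (range m) ε) / m : ℝ) := by
  set c := Real.log (spaN T (range m) ε) / m
  have hc : (0 : EReal) ≤ c := EReal.coe_nonneg.2 <|
    div_nonneg (Real.log_natCast_nonneg _) (Nat.cast_nonneg _)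
  calc _ ≤ limsup (fun n : ℕ ↦ (c : EReal) * (#((Icc 1 n).image A + range m) / n : ℝ)) atTop := by
        refine limsup_le_limsup (.of_forall fun n ↦ ?_)
        beta_reduce
        rw [← EReal.coe_mul, EReal.coe_le_coe_iff, mul_comm, div_mul_eq_mul_div]
        gcongr
        exact log_spaN_le_card_mul hT _ hm hε
    _ = c * limsup (fun n : ℕ ↦ ((#((Icc 1 n).image A + range m) / n : ℝ) : EReal)) atTop :=
        EReal.limsup_const_mul_of_nonneg_of_ne_top hc (EReal.coe_ne_top c)
    _ ≤ c * KA A := mul_le_mul_of_nonneg_left (limsup_le_KA A m) hc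
    _ = KA A * c := mul_comm ..

lemma seqEntTop_le_KA_mul_htopN (hT : Continuous T) {A : ℕ → ℕ} (hA : KA A ≠ ⊤) :
    seqEntTop T A ≤ KA A * htopN T := by
  refine iSup₂_le fun ε hε ↦ ?_
  calc _ ≤ limsup (fun m : ℕ ↦
          KA A * ((Real.log (spaN T (range m) (ε / 2)) / m : ℝ) : EReal)) atTop := by
        refine le_limsup_of_frequently_le ((eventually_gt_atTop 0).mono fun m hm ↦ ?_).frequently
        simpa only [add_halves] using limsup_log_spaN_le_KA_mul hT A hm (half_pos hε)
    _ = KA A * limsup (fun m : ℕ ↦ ((Real.log (spaN T (range m) (ε / 2)) / m : ℝ) : EReal))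
          atTop := EReal.limsup_const_mul_of_nonneg_of_ne_top (KA_nonneg A) hA
    _ ≤ KA A * htopN T := by
        refine mul_le_mul_of_nonneg_left ?_ (KA_nonneg A)
        rw [htopN_eq_iSup_limsup]
        exact le_iSup₂_of_le (ε / 2) (half_pos hε) le_rfl

theorem seqEntTop_eq_KA_mul_htopN (hT : Continuous T) {A : ℕ → ℕ}
    (h : KA A ≠ ⊤ ∨ 0 < htopN T) : seqEntTop T A = KA A * htopN T := by
  refine (KA_mul_htopN_le_seqEntTop hT A).antisymm' ?_
  by_cases hA : KA A = ⊤
  · rw [hA, EReal.top_mul_of_pos (h.resolve_left (not_not.2 hA))]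
    exact le_top
  · exact seqEntTop_le_KA_mul_htopN hT hA

end EntropyFormula

/-- Unless (`K(A) = ∞` and `h_top(T) = 0`), the topological sequence
entropy satisfies: `h^A_top(T) = K(A)·h_top(T)` when both are finite; `h^A_top(T) = ∞`
when `K(A) = ∞, h_top(T) > 0`, or when `K(A) > 0, h_top(T) = ∞`; and `h^A_top(T) = 0`
when `K(A) = 0` and `h_top(T) = ∞`. -/
theorem stmt5 [CompactSpace X] [Nonempty X] (T : X → X) (hT : Continuous T) (A : ℕ → ℕ) :
    (KA A ≠ ⊤ → htopN T ≠ ⊤ → seqEntTop T A = KA A * htopN T) ∧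
    (KA A = ⊤ → 0 < htopN T → seqEntTop T A = ⊤) ∧
    (0 < KA A → htopN T = ⊤ → seqEntTop T A = ⊤) ∧
    (KA A = 0 → htopN T = ⊤ → seqEntTop T A = 0) := by
  refine ⟨fun hA _ ↦ ?_, fun hA h_pos ↦ ?_, fun h_pos h_top ↦ ?_, fun hA _ ↦ ?_⟩
  · exact seqEntTop_eq_KA_mul_htopN hT (.inl hA)
  · rw [seqEntTop_eq_KA_mul_htopN hT (.inr h_pos), hA, EReal.top_mul_of_pos h_pos]
  · rw [seqEntTop_eq_KA_mul_htopN hT (.inr (h_top ▸ EReal.zero_lt_top)), h_top,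
      EReal.mul_top_of_pos h_pos]
  · rw [seqEntTop_eq_KA_mul_htopN hT (.inl (hA ▸ EReal.zero_ne_top)), hA, zero_mul]
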